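/- Fix θ > 0 and define f_θ(ξ) := E[(ξ−Y)·Y·1{Y≤ξ}] / E[(ξ−Y)·1{Y≤ξ}] − (E[Y] − θ). Then f_θ(ξ) < 0 for every ξ ≤ E[Y] − θ. (Indeed the numerator of f_θ equals E[(ξ−Y)(Y − E[Y] + θ)·1{Y≤ξ}] = −E[(ξ−Y)²·1{Y≤ξ}] + (ξ − E[Y] + θ)·E[(ξ−Y)·1{Y≤ξ}], which is strictly negative when ξ ≤ E[Y] − θ.) -/

import Mathlib

open MeasureTheory

/-!
The quotient in `f_θ(ξ)` is the average of `Y` over `{Y ≤ ξ}` with weight `ξ - Y`. This weight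
vanishes at `Y = ξ`, so only values `Y < ξ` are averaged and the average is less than
`ξ ≤ E[Y] - θ`. The average is not `0 / 0` because a positive density charges `(-∞, ξ)`.
-/

theorem integral_mul_div_integral_lt {α : Type*} [MeasurableSpace α] {μ : Measure α}
    {w f : α → ℝ} {b : ℝ} (hw : Integrable w μ) (hwf : Integrable (fun x => w x * f x) μ)
    (hw_nonneg : 0 ≤ᵐ[μ] w) (hw_support : 0 < μ (Function.support w))
    (hf_lt : ∀ᵐ x ∂μ, w x ≠ 0 → f x < b) :
    (∫ x, w x * f x ∂μ) / (∫ x, w x ∂μ) < b := by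
  have weight_pos : 0 < ∫ x, w x ∂μ :=
    (integral_pos_iff_support_of_nonneg_ae hw_nonneg hw).2 hw_support
  have gap_integrable : Integrable (fun x => w x * (b - f x)) μ := by
    simp only [mul_sub]
    exact (hw.mul_const b).sub hwf
  have gap_nonneg : 0 ≤ᵐ[μ] fun x => w x * (b - f x) := by
    filter_upwards [hw_nonneg, hf_lt] with x hwx hfx
    rcases eq_or_ne (w x) 0 with hx | hx
    · simp [hx]
    · exact mul_nonneg hwx (sub_nonneg.2 (hfx hx).le)
  have support_le : Function.support w ≤ᵐ[μ] Function.support fun x => w x * (b - f x) := by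
    filter_upwards [hf_lt] with x hfx hx
    exact mul_ne_zero hx (sub_pos.2 (hfx hx)).ne'
  have gap_pos : 0 < ∫ x, w x * (b - f x) ∂μ :=
    (integral_pos_iff_support_of_nonneg_ae gap_nonneg gap_integrable).2
      (hw_support.trans_le (measure_mono_ae support_le))
  simp only [mul_sub] at gap_pos
  rw [integral_sub (hw.mul_const b) hwf, integral_mul_const, sub_pos] at gap_pos
  exact (div_lt_iff₀' weight_pos).2 gap_pos

theorem isOpenPosMeasure_withDensity_ofReal {X : Type*} [TopologicalSpace X] [MeasurableSpace X]
    {ν : Measure X} [ν.IsOpenPosMeasure] {p : X → ℝ} (hp : AEMeasurable p ν)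
    (hp_pos : ∀ᵐ x ∂ν, 0 < p x) :
    (ν.withDensity fun x => ENNReal.ofReal (p x)).IsOpenPosMeasure :=
  (withDensity_absolutelyContinuous' hp.ennreal_ofReal
    (hp_pos.mono fun _ hx => (ENNReal.ofReal_pos.2 hx).ne')).isOpenPosMeasure

theorem stmt_6_general {μ : Measure ℝ} [IsFiniteMeasure μ] {ξ : ℝ}
    (hmom : IntegrableOn (fun y => y ^ 2) (Set.Iic ξ) μ) (hξ : 0 < μ (Set.Iio ξ)) :
    (∫ y in Set.Iic ξ, (ξ - y) * y ∂μ) / (∫ y in Set.Iic ξ, (ξ - y) ∂μ) < ξ := by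
  have id_memLp : MemLp (fun y : ℝ => y) 2 (μ.restrict (Set.Iic ξ)) :=
    (memLp_two_iff_integrable_sq aestronglyMeasurable_id).2 hmom
  have weight_memLp : MemLp (fun y : ℝ => ξ - y) 2 (μ.restrict (Set.Iic ξ)) :=
    (memLp_const ξ).sub id_memLp
  have mem_Iic : ∀ᵐ y ∂μ.restrict (Set.Iic ξ), y ≤ ξ := ae_restrict_mem measurableSet_Iic
  refine integral_mul_div_integral_lt (weight_memLp.integrable one_le_two)
    (weight_memLp.integrable_mul id_memLp) (mem_Iic.mono fun _ => sub_nonneg.2) ?_ ?_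
  · calc
      0 < μ (Set.Iio ξ) := hξ
      _ ≤ μ (Function.support (fun y => ξ - y) ∩ Set.Iic ξ) :=
        measure_mono fun _ hy => ⟨(sub_pos.2 hy).ne', Set.Iio_subset_Iic_self hy⟩
      _ ≤ μ.restrict (Set.Iic ξ) (Function.support fun y => ξ - y) :=
        Measure.le_restrict_apply _ _
  · exact mem_Iic.mono fun y hy hne => hy.lt_of_ne (sub_ne_zero.1 hne).symm

/-- For `θ > 0`, the function
`f_θ(ξ) = E[(ξ-Y) Y 1{Y≤ξ}] / E[(ξ-Y) 1{Y≤ξ}] - (E[Y] - θ)` is strictly negative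
for every `ξ ≤ E[Y] - θ`. -/
theorem stmt_6 (μ : Measure ℝ) [IsProbabilityMeasure μ] (p : ℝ → ℝ)
    (hp_cont : Continuous p) (hp_pos : ∀ x, 0 < p x)
    (hμ : μ = MeasureTheory.volume.withDensity fun x => ENNReal.ofReal (p x))
    (hmom : Integrable (fun y => y ^ 2) μ)
    (θ : ℝ) (hθ : 0 < θ) :
    ∀ ξ : ℝ, ξ ≤ (∫ y, y ∂μ) - θ →
      (∫ y in Set.Iic ξ, (ξ - y) * y ∂μ) / (∫ y in Set.Iic ξ, (ξ - y) ∂μ) -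
        ((∫ y, y ∂μ) - θ) < 0 := by
  intro ξ hξ
  have : μ.IsOpenPosMeasure :=
    hμ ▸ isOpenPosMeasure_withDensity_ofReal hp_cont.aemeasurable (.of_forall hp_pos)
  exact sub_neg.2 <|
    (stmt_6_general hmom.integrableOn (Measure.measure_Iio_pos μ ξ)).trans_le hξ
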